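/- arXiv:1606.04850 — 2 statements merged into one kernel-verified Lean document; each statement's English description precedes it below -/
import Mathlib

section
/- The series ∑_{n=0}^∞ ζ(2n)/((2n+1)(n+1)·4^n) equals -7ζ(3)/(2π²). -/
open Real

lemma hs_congr {ι : Type} {f g : ι → ℝ} {a b : ℝ} (h : HasSum f a) (h1 : ∀ n, g n = f n) (h2 : b = a) :
    HasSum g b := by
  have : g = f := funext h1
  rw [this, h2]; exact h

noncomputable def Zr (n : ℕ) : ℝ := if n = 0 then -1/2 else ∑' k : ℕ, 1 / ((k:ℝ)+1)^(2*n)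

lemma Zr_zeta (n : ℕ) : ((Zr n : ℝ) : ℂ) = riemannZeta (2 * n) := by
  unfold Zr
  split_ifs with h
  · subst h; simp [riemannZeta_zero]
  · have h1 : 1 < 2 * n := by omega
    have := zeta_nat_eq_tsum_of_gt_one h1
    push_cast at this
    rw [this]
    have h2 : Summable (fun k : ℕ => 1 / (k:ℂ)^(2*n)) := by
      have : Summable (fun k : ℕ => 1 / (k:ℝ)^(2*n)) := Real.summable_one_div_nat_pow.2 h1
      simpa using Complex.ofRealCLM.summable this
    rw [h2.tsum_eq_zero_add]
    push_cast
    simp [h]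

lemma sq_summable : Summable (fun k : ℕ => 1 / ((k:ℝ)+1)^2) := by
  have : Summable (fun k : ℕ => 1 / (k:ℝ)^2) := Real.summable_one_div_nat_pow.2 (by norm_num)
  exact_mod_cast (summable_nat_add_iff 1).2 this

lemma cotsum (t : ℝ) (h0 : 0 < t) (h1 : t < 1) :
    HasSum (fun k : ℕ => t^2/(((k:ℝ)+1)^2 - t^2)) ((1 - π * t * (cos (π*t) / sin (π*t)))/2) := by
  have hz : (t:ℂ) ∈ Complex.integerComplement := by
    rintro ⟨m, hm⟩
    have hm' : (m:ℝ) = t := by exact_mod_cast hm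
    rw [← hm'] at h0 h1
    have : 0 < m := by exact_mod_cast h0
    have : m < 1 := by exact_mod_cast h1
    omega
  have hs := (summable_cotTerm hz).hasSum
  have e := cot_series_rep' hz
  have e2 : (∑' n, cotTerm (t:ℂ) n) = ((π * (cos (π*t)/ sin (π*t)) - 1/t : ℝ):ℂ) := by
    rw [show (∑' n, cotTerm (t:ℂ) n) = _ from e.symm]
    push_cast [Complex.cot]
    rfl
  rw [e2] at hs
  have hs2 : HasSum (fun n : ℕ => 1/(t - ((n:ℝ)+1)) + 1/(t + ((n:ℝ)+1))) (π * (cos (π*t)/ sin (π*t)) - 1/t) := by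
    rw [← Complex.hasSum_ofReal]
    convert hs using 2 with n
    simp [cotTerm]
  have := hs2.mul_left (-t/2)
  refine hs_congr this (fun k => ?_) ?_
  · have : (0:ℝ) ≤ k := k.cast_nonneg
    have a : t - ((k:ℝ)+1) ≠ 0 := by apply ne_of_lt; linarith
    have b : t + ((k:ℝ)+1) ≠ 0 := by positivity
    have c : ((k:ℝ)+1)^2 - t^2 ≠ 0 := by apply ne_of_gt; nlinarith
    field_simp
    ring
  · field_simp
    ring

lemma lemA (t : ℝ) (h0 : 0 < t) (h1 : t < 1) :
    HasSum (fun n : ℕ => Zr n * t^(2*n)) (-(π * t * (cos (π*t) / sin (π*t)))/2) := by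
  have hF : Summable (fun p : ℕ × ℕ => (t/((p.2:ℝ)+1))^(2*(p.1+1))) := by
    have g : Summable (fun n : ℕ => (t^2)^n) := summable_geometric_of_lt_one (by positivity) (by nlinarith)
    have := g.mul_of_nonneg sq_summable (fun n => by positivity) (fun n => by positivity)
    refine Summable.of_nonneg_of_le (fun p => by positivity) (fun p => ?_) this
    have hk : (0:ℝ) ≤ p.2 := p.2.cast_nonneg
    have hd : t/((p.2:ℝ)+1) ≤ t := div_le_self h0.le (by linarith)
    calc (t/((p.2:ℝ)+1))^(2*(p.1+1)) = ((t/((p.2:ℝ)+1))^2)^p.1 * (t/((p.2:ℝ)+1))^2 := by ring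
      _ ≤ (t^2)^p.1 * (1/((p.2:ℝ)+1))^2 := by gcongr
      _ = _ := by rw [div_pow, one_pow]
  have hs : HasSum (fun p : ℕ × ℕ => (t/((p.2:ℝ)+1))^(2*(p.1+1))) ((1 - π * t * (cos (π*t) / sin (π*t)))/2) := by
    have e : (∑' p : ℕ × ℕ, (t/((p.2:ℝ)+1))^(2*(p.1+1))) = ((1 - π * t * (cos (π*t) / sin (π*t)))/2) := by
      rw [hF.tsum_prod, ← Summable.tsum_comm (f := fun n k : ℕ => (t/((k:ℝ)+1))^(2*(n+1))) hF, ← (cotsum t h0 h1).tsum_eq]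
      congr 1
      ext k
      have hk : (0:ℝ) ≤ k := k.cast_nonneg
      have hlt : (t/((k:ℝ)+1))^2 < 1 := by
        have : t/((k:ℝ)+1) < 1 := by rw [div_lt_one (by linarith)]; linarith
        have : 0 < t/((k:ℝ)+1) := by positivity
        nlinarith
      have c : ((k:ℝ)+1)^2 - t^2 ≠ 0 := by apply ne_of_gt; nlinarith
      have := tsum_geometric_of_lt_one (by positivity) hlt
      calc (∑' n : ℕ, (t/((k:ℝ)+1))^(2*(n+1))) = ∑' n : ℕ, (t/((k:ℝ)+1))^2 * ((t/((k:ℝ)+1))^2)^n := by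
            congr 1; ext n; ring
        _ = (t/((k:ℝ)+1))^2 * (1 - (t/((k:ℝ)+1))^2)⁻¹ := by rw [tsum_mul_left, this]
        _ = _ := by
          have : 1 - (t/((k:ℝ)+1))^2 = (((k:ℝ)+1)^2 - t^2)/((k:ℝ)+1)^2 := by field_simp
          rw [this]; field_simp
    rw [← e]; exact hF.hasSum
  have h2 := hs.prod_fiberwise (fun n => (hF.prod_factor n).hasSum)
  rw [← hasSum_nat_add_iff' 1]
  refine hs_congr h2 (fun n => ?_) ?_
  · simp only [Zr, Nat.succ_ne_zero, if_false, div_pow, ← tsum_mul_right]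
    congr 1; ext k; ring
  · simp [Zr]; ring

lemma Zr_bound (n : ℕ) : |Zr n| ≤ 1/2 + ∑' k : ℕ, 1 / ((k:ℝ)+1)^2 := by
  have hp : 0 ≤ ∑' k : ℕ, 1 / ((k:ℝ)+1)^2 := tsum_nonneg (fun k => by positivity)
  unfold Zr
  split_ifs with h
  · rw [show |(-1/2:ℝ)| = 1/2 by norm_num [abs_div]]; linarith
  · rw [abs_of_nonneg (tsum_nonneg (fun k => by positivity))]
    have hle : ∀ k : ℕ, 1 / ((k:ℝ)+1)^(2*n) ≤ 1 / ((k:ℝ)+1)^2 := fun k => by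
      have hk : (0:ℝ) ≤ k := k.cast_nonneg
      gcongr
      · linarith
      · omega
    have := Summable.tsum_le_tsum hle (Summable.of_nonneg_of_le (fun k => by positivity) hle sq_summable) sq_summable
    linarith

lemma intC (n : ℕ) : ∫ t in (0:ℝ)..(1/2), (1/2 - t) * (Zr n * t^(2*n)) =
    (1/8) * (Zr n / ((2*n+1)*(n+1)*4^n)) := by
  have : ∀ t : ℝ, (1/2 - t) * (Zr n * t^(2*n)) = (Zr n/2) * t^(2*n) - Zr n * t^(2*n+1) := fun t => by ring
  simp_rw [this]
  rw [intervalIntegral.integral_sub (by apply Continuous.intervalIntegrable; fun_prop) (by apply Continuous.intervalIntegrable; fun_prop),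
    intervalIntegral.integral_const_mul, intervalIntegral.integral_const_mul, integral_pow, integral_pow]
  push_cast
  have : (4:ℝ)^n = 2^(2*n) := by rw [pow_mul]; norm_num
  rw [this]
  simp only [one_div, inv_pow]
  field_simp
  ring

lemma lemC : HasSum (fun n : ℕ => (1/8) * (Zr n / ((2*n+1)*(n+1)*4^n)))
    (∫ t in (0:ℝ)..(1/2), (1/2 - t) * (-(π * t * (cos (π*t) / sin (π*t)))/2)) := by
  simp_rw [← intC]
  set C := 1/2 + ∑' k : ℕ, 1 / ((k:ℝ)+1)^2 with hC
  refine intervalIntegral.hasSum_integral_of_dominated_convergence (fun n _ => C * (1/4)^n) ?_ ?_ ?_ ?_ ?_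
  · intro n
    apply Continuous.aestronglyMeasurable
    fun_prop
  · intro n
    refine .of_forall fun t ht => ?_
    rw [Set.uIoc_of_le (by norm_num)] at ht
    obtain ⟨a, b⟩ := ht
    rw [norm_mul, norm_mul, Real.norm_eq_abs, Real.norm_eq_abs, Real.norm_eq_abs, abs_of_nonneg (by linarith : 0 ≤ 1/2 - t), abs_of_nonneg (by positivity : 0 ≤ t^(2*n))]
    have e : t^(2*n) ≤ (1/4)^n := by rw [pow_mul]; gcongr; nlinarith
    calc (1/2 - t) * (|Zr n| * t^(2*n)) ≤ 1 * (|Zr n| * t^(2*n)) := by gcongr; linarith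
      _ = |Zr n| * t^(2*n) := one_mul _
      _ ≤ _ := by gcongr; exact Zr_bound n
  · refine .of_forall fun t ht => ?_
    exact (summable_geometric_of_lt_one (by norm_num) (by norm_num)).mul_left _
  · simp
  · refine .of_forall fun t ht => ?_
    rw [Set.uIoc_of_le (by norm_num)] at ht
    obtain ⟨a, b⟩ := ht
    exact (lemA t a (by linarith)).mul_left _

noncomputable def gg (t : ℝ) : ℝ := t * (1/2 - t) / sin (π * t)

lemma gg_int : IntervalIntegrable gg MeasureTheory.volume 0 (1/2) := by
  refine (intervalIntegrable_const (c := (1:ℝ))).mono_fun ?_ ?_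
  · apply Measurable.aestronglyMeasurable
    unfold gg
    fun_prop
  · refine (MeasureTheory.ae_restrict_iff' measurableSet_uIoc).2 (.of_forall fun t ht => ?_)
    rw [Set.uIoc_of_le (by norm_num)] at ht
    obtain ⟨a, b⟩ := ht
    have h := Real.mul_le_sin (x := π * t) (by positivity) (by nlinarith [pi_pos])
    have h' : 2 / π * (π * t) = 2 * t := by field_simp
    rw [h'] at h
    simp only [norm_one, gg, Real.norm_eq_abs]
    rw [abs_of_nonneg (div_nonneg (mul_nonneg a.le (by linarith)) (by linarith)), div_le_one (by linarith)]
    nlinarith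

lemma gg_RL : Filter.Tendsto (fun N : ℕ => ∫ t in (0:ℝ)..(1/2), gg t * cos ((2*N+1) * π * t)) Filter.atTop (nhds 0) := by
  have h := Real.tendsto_integral_exp_smul_cocompact (fun t : ℝ => (((Set.Ioc (0:ℝ) (1/2)).indicator gg t : ℝ) : ℂ))
  have hN : Filter.Tendsto (fun N : ℕ => (N:ℝ) + 1/2) Filter.atTop (Filter.cocompact ℝ) := by
    refine Filter.Tendsto.mono_right ?_ atTop_le_cocompact
    exact Filter.tendsto_atTop_add_const_right _ _ tendsto_natCast_atTop_atTop
  have h2 := (Complex.continuous_re.tendsto _).comp (h.comp hN)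
  simp only [Complex.zero_re] at h2
  refine h2.congr fun N => ?_
  simp only [Function.comp]
  have gi : MeasureTheory.Integrable ((Set.Ioc (0:ℝ) (1/2)).indicator gg) := by
    rw [MeasureTheory.integrable_indicator_iff measurableSet_Ioc]
    exact (intervalIntegrable_iff_integrableOn_Ioc_of_le (by norm_num)).1 gg_int
  have gi2 : MeasureTheory.Integrable (fun v : ℝ => fourierChar (-(v * ((N:ℝ)+1/2))) • (((Set.Ioc (0:ℝ) (1/2)).indicator gg v : ℝ) : ℂ)) := by
    refine MeasureTheory.Integrable.mono (g := fun v => (((Set.Ioc (0:ℝ) (1/2)).indicator gg v : ℝ) : ℂ)) gi.ofReal ?_ ?_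
    · simp only [Circle.smul_def, smul_eq_mul]
      refine MeasureTheory.AEStronglyMeasurable.mul ?_ gi.ofReal.aestronglyMeasurable
      apply Continuous.aestronglyMeasurable
      simp only [Real.fourierChar_apply]
      fun_prop
    · refine .of_forall fun v => ?_
      rw [Circle.norm_smul]
  have h3 := integral_re gi2
  simp only [RCLike.re_eq_complex_re] at h3
  rw [← h3, intervalIntegral.integral_of_le (by norm_num), ← MeasureTheory.integral_indicator measurableSet_Ioc]
  congr 1
  ext v
  simp only [Circle.smul_def, smul_eq_mul, Real.fourierChar_apply, Set.indicator]
  split_ifs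
  · rw [Complex.re_mul_ofReal, Complex.exp_ofReal_mul_I_re, mul_comm, ← cos_neg]
    congr 2
    ring
  · simp

lemma sin_int (k : ℕ) : ∫ t in (0:ℝ)..(1/2), t * (1/2 - t) * sin (2 * π * (k+1) * t) =
    2 * (1 - (-1)^(k+1)) / (2*π*(k+1))^3 := by
  set a := 2 * π * ((k:ℝ)+1) with ha
  have hk : (0:ℝ) ≤ k := k.cast_nonneg
  have ha0 : a ≠ 0 := by positivity
  have hd : ∀ t ∈ Set.uIcc (0:ℝ) (1/2), HasDerivAt (fun t => -(t*(1/2-t)) * cos (a*t)/a + (1/2-2*t) * sin (a*t)/a^2 - 2 * cos (a*t)/a^3) (t * (1/2 - t) * sin (a * t)) t := by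
    intro t _
    have h1 : HasDerivAt (fun t : ℝ => a*t) a t := by simpa using (hasDerivAt_id t).const_mul a
    have hc := h1.cos
    have hs := h1.sin
    have p1 : HasDerivAt (fun t : ℝ => -(t*(1/2-t))) (2*t - 1/2) t := by
      have := ((hasDerivAt_id t).mul ((hasDerivAt_id t).const_sub (1/2))).neg
      refine this.congr_deriv ?_
      simp only [id]; ring
    have p2 : HasDerivAt (fun t : ℝ => 1/2 - 2*t) (-2) t := by
      refine (((hasDerivAt_id t).const_mul 2).const_sub (1/2)).congr_deriv ?_
      ring
    refine ((((p1.mul hc).div_const a).add ((p2.mul hs).div_const (a^2))).sub ((hc.const_mul 2).div_const (a^3))).congr_deriv ?_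
    field_simp
    ring
  rw [intervalIntegral.integral_eq_sub_of_hasDerivAt hd (by apply Continuous.intervalIntegrable; fun_prop)]
  have e : a * (1/2) = ((k+1 : ℕ):ℝ) * π := by rw [ha]; push_cast; ring
  rw [e, Real.cos_nat_mul_pi, Real.sin_nat_mul_pi]
  simp
  field_simp
  ring

lemma dirichlet (x : ℝ) (N : ℕ) : sin x * ∑ k ∈ Finset.range N, 2 * sin (2 * (k+1) * x) = cos x - cos ((2*N+1)*x) := by
  induction N with
  | zero => simp
  | succ N ih =>
    rw [Finset.sum_range_succ, mul_add, ih]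
    have e1 : (2*(N:ℝ)+1)*x = 2*(N+1)*x - x := by ring
    have e2 : (2*((N+1:ℕ):ℝ)+1)*x = 2*(N+1)*x + x := by push_cast; ring
    rw [e1, e2, cos_sub, cos_add]; ring

lemma lemD : HasSum (fun k : ℕ => 2 * (2 * (1 - (-1:ℝ)^(k+1)) / (2*π*(k+1))^3)) (∫ t in (0:ℝ)..(1/2), gg t * cos (π * t)) := by
  have hnn : ∀ k : ℕ, 0 ≤ 2 * (2 * (1 - (-1:ℝ)^(k+1)) / (2*π*(k+1))^3) := fun k => by
    have : (-1:ℝ)^(k+1) ≤ 1 := by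
      rcases neg_one_pow_eq_or ℝ (k+1) with h | h <;> rw [h]; norm_num
    have : 0 ≤ 1 - (-1:ℝ)^(k+1) := by linarith
    positivity
  rw [hasSum_iff_tendsto_nat_of_nonneg hnn]
  have h := (gg_RL.const_sub (∫ t in (0:ℝ)..(1/2), gg t * cos (π * t)))
  rw [sub_zero] at h
  refine h.congr fun N => ?_
  have hg : ∀ c : ℝ, IntervalIntegrable (fun t => gg t * cos (c * t)) MeasureTheory.volume 0 (1/2) := fun c =>
    gg_int.mul_continuousOn (by fun_prop)
  rw [← intervalIntegral.integral_sub (hg _) (hg _)]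
  simp_rw [← sin_int, ← intervalIntegral.integral_const_mul]
  rw [← intervalIntegral.integral_finsetSum (fun k _ => by apply Continuous.intervalIntegrable; fun_prop)]
  apply intervalIntegral.integral_congr_ae
  refine .of_forall fun t ht => ?_
  rw [Set.uIoc_of_le (by norm_num)] at ht
  obtain ⟨a, b⟩ := ht
  have hs : sin (π*t) ≠ 0 := (sin_pos_of_pos_of_lt_pi (by positivity) (by nlinarith [pi_pos])).ne'
  have := dirichlet (π*t) N
  rw [← mul_sub, show (2*(N:ℝ)+1)*π*t = (2*N+1)*(π*t) by ring, ← this, gg, Finset.mul_sum, Finset.mul_sum]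
  refine Finset.sum_congr rfl fun k _ => ?_
  rw [show 2*π*((k:ℝ)+1)*t = 2*(k+1)*(π*t) by ring]
  generalize sin (2*((k:ℝ)+1)*(π*t)) = y
  generalize sin (π*t) = x at hs
  field_simp

lemma cube_summable : Summable (fun k : ℕ => 1 / ((k:ℝ)+1)^3) := by
  have : Summable (fun k : ℕ => 1 / (k:ℝ)^3) := Real.summable_one_div_nat_pow.2 (by norm_num)
  exact_mod_cast (summable_nat_add_iff 1).2 this

noncomputable def ww (k : ℕ) : ℝ := (1+(-1:ℝ)^(k+1)) / ((k:ℝ)+1)^3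

lemma ww_odd (j : ℕ) : ww (2*j+1) = 1/4 * (1 / ((j:ℝ)+1)^3) := by
  have : (-1:ℝ)^(2*j+1+1) = 1 := by rw [show 2*j+1+1 = 2*(j+1) by ring, pow_mul]; simp
  rw [ww, this]
  push_cast
  rw [show (2*(j:ℝ)+1+1) = 2*(j+1) by ring, mul_pow]
  field_simp
  norm_num

lemma ww_even (j : ℕ) : ww (2*j) = 0 := by
  simp [ww, pow_succ, pow_mul]

lemma ww_term (k : ℕ) : 2 * (2 * (1 - (-1:ℝ)^(k+1)) / (2*π*(k+1))^3) =
    1/(2*π^3) * (2 * (1 / ((k:ℝ)+1)^3) - ww k) := by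
  rw [ww]
  have : (k:ℝ)+1 ≠ 0 := by positivity
  generalize (k:ℝ)+1 = x at *
  generalize (-1:ℝ)^(k+1) = y
  field_simp
  ring

lemma ww_sum (S : ℝ) (h1 : HasSum (fun k : ℕ => 1 / ((k:ℝ)+1)^3) S) : HasSum ww (S/4) := by
  have ho : HasSum (fun j : ℕ => ww (2*j+1)) (1/4*S) := hs_congr (h1.mul_left (1/4)) ww_odd rfl
  have he : HasSum (fun j : ℕ => ww (2*j)) 0 := hs_congr hasSum_zero ww_even rfl
  have h2 := HasSum.even_add_odd (f := ww) he ho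
  rw [show S/4 = 0 + 1/4*S by ring]
  exact h2

lemma lemE : (∫ t in (0:ℝ)..(1/2), gg t * cos (π * t)) = 7/(8*π^3) * ∑' k : ℕ, 1 / ((k:ℝ)+1)^3 := by
  refine lemD.unique ?_
  have h1 := cube_summable.hasSum
  generalize (∑' k : ℕ, 1 / ((k:ℝ)+1)^3) = S at *
  have h3 := ((h1.mul_left 2).sub (ww_sum S h1)).mul_left (1/(2*π^3))
  refine hs_congr h3 ww_term ?_
  field_simp
  ring

theorem stmt13 :
    ∑' n : ℕ, riemannZeta (2 * n) / ((2 * n + 1) * (n + 1) * 4 ^ n) =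
      -7 * riemannZeta 3 / (2 * (π : ℂ) ^ 2) := by
  have h := lemC.mul_left 8
  have e : (∫ t in (0:ℝ)..(1/2), (1/2 - t) * (-(π * t * (cos (π*t) / sin (π*t)))/2)) = -(π/2) * ∫ t in (0:ℝ)..(1/2), gg t * cos (π * t) := by
    rw [← intervalIntegral.integral_const_mul]
    congr 1; ext t; unfold gg; ring
  rw [e, lemE] at h
  have h' := (Complex.hasSum_ofReal.2 h).tsum_eq
  have hz : riemannZeta 3 = ((∑' k : ℕ, 1 / ((k:ℝ)+1)^3 : ℝ) : ℂ) := by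
    have := zeta_nat_eq_tsum_of_gt_one (k := 3) (by norm_num)
    push_cast at this
    rw [this]
    have h2 : Summable (fun k : ℕ => 1 / (k:ℂ)^3) := by
      have : Summable (fun k : ℕ => 1 / (k:ℝ)^3) := Real.summable_one_div_nat_pow.2 (by norm_num)
      simpa using Complex.ofRealCLM.summable this
    rw [h2.tsum_eq_zero_add]
    push_cast
    simp
  rw [hz]
  convert h' using 1
  · congr 1; ext n
    rw [← Zr_zeta]
    push_cast
    ring
  · push_cast
    have : (π:ℂ) ≠ 0 := by exact_mod_cast pi_ne_zero
    field_simp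
end

section
/- The series ∑_{n=1}^∞ ζ(2n+1)/((2n+1)(2n+3)·4^n) equals -2·log A + 1/4 - γ/3 + (2/3)·log 2, where A is the Glaisher-Kinkelin constant and γ is the Euler-Mascheroni constant. -/
open Real

noncomputable def PP (s : ℂ) (n : ℕ) : ℂ := ∏ i ∈ Finset.range n, (s + i)

lemma multichoose_eq_PP (a : ℂ) (n : ℕ) : Ring.multichoose a n = PP a n / (n.factorial : ℂ) := by
  have h := Ring.factorial_nsmul_multichoose_eq_ascPochhammer a n
  have h2 : (ascPochhammer ℕ n).smeval a = PP a n := by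
    induction n with
    | zero => simp [PP]
    | succ n ih =>
      rw [ascPochhammer_succ_right, Polynomial.smeval_mul, ih
        (Ring.factorial_nsmul_multichoose_eq_ascPochhammer a n)]
      simp [PP, Finset.prod_range_succ, Polynomial.smeval_add, Polynomial.smeval_natCast]
  have h0 : (n.factorial : ℂ) ≠ 0 := by exact_mod_cast n.factorial_ne_zero
  rw [h2, nsmul_eq_mul] at h
  rw [← h]; field_simp

lemma binom (a x : ℂ) (hx : ‖x‖ < 1) :
    HasSum (fun n : ℕ => PP a n / (n.factorial : ℂ) * x ^ n) ((1 - x) ^ (-a)) := by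
  have h := (Complex.one_add_cpow_hasFPowerSeriesOnBall_zero (a := -a)).hasSum (y := -x)
    (by simpa [Metric.eball, edist_zero_right, enorm_eq_nnnorm, ← NNReal.coe_lt_coe] using hx)
  simp only [zero_add, binomialSeries_apply, List.ofFn_const, List.prod_replicate] at h
  rw [← sub_eq_add_neg] at h
  refine h.congr_fun ?_ |> fun h => h
  intro n
  rw [Ring.choose_neg', multichoose_eq_PP, neg_pow]
  have : (Int.negOnePow n • (PP a n / (n.factorial : ℂ))) = (-1)^n * (PP a n / (n.factorial : ℂ)) := by
    simp [Units.smul_def]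
  rw [this, smul_eq_mul]
  have : ((-1:ℂ)^n) * (-1)^n = 1 := by rw [← mul_pow]; simp
  linear_combination (-(PP a n / (n.factorial : ℂ) * x ^ n)) * this

lemma PP_succ (s : ℂ) (n : ℕ) : PP (s - 1) (n + 1) = (s - 1) * PP s n := by
  simp only [PP, Finset.prod_range_succ']
  rw [mul_comm]; push_cast; congr 1
  · simp
  · exact Finset.prod_congr rfl fun i _ => by ring

lemma even_part (a x : ℂ) (hx : ‖x‖ < 1) :
    HasSum (fun j : ℕ => 2 * (PP a (2*j) / ((2*j).factorial : ℂ) * x ^ (2*j)))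
      ((1 - x) ^ (-a) + (1 + x) ^ (-a)) := by
  have h := (binom a x hx).add (binom a (-x) (by simpa using hx))
  rw [sub_neg_eq_add] at h
  have hi : Function.Injective (fun j : ℕ => 2 * j) := fun a b h => by simpa using h
  rw [← hi.hasSum_iff] at h
  · refine h.congr_fun ?_ |> fun h => h
    intro j
    simp [pow_mul]; ring
  · intro n hn
    have : Odd n := by
      rw [← Nat.not_even_iff_odd]; rintro ⟨k, rfl⟩; exact hn ⟨k, by simp; ring⟩
    rw [this.neg_pow]; ring

lemma odd_part (a x : ℂ) (hx : ‖x‖ < 1) :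
    HasSum (fun j : ℕ => 2 * (PP a (2*j+1) / ((2*j+1).factorial : ℂ) * x ^ (2*j+1)))
      ((1 - x) ^ (-a) - (1 + x) ^ (-a)) := by
  have h := (binom a x hx).sub (binom a (-x) (by simpa using hx))
  rw [sub_neg_eq_add] at h
  have hi : Function.Injective (fun j : ℕ => 2 * j + 1) := fun a b h => by simpa using h
  rw [← hi.hasSum_iff] at h
  · refine h.congr_fun ?_ |> fun h => h
    intro j
    simp [pow_succ, pow_mul]; ring
  · intro n hn
    have : Even n := by
      rw [← Nat.not_odd_iff_even]; rintro ⟨k, rfl⟩; exact hn ⟨k, by simp⟩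
    rw [this.neg_pow]; ring

noncomputable def cc (s : ℂ) (j : ℕ) : ℂ :=
  PP s (2*j) / ((2*j+1).factorial : ℂ) * (2 * j + (s + 1) / 2) / 4 ^ j

noncomputable def EE (s : ℂ) (k : ℕ) : ℂ := ((k : ℂ) + 1 / 2) ^ (-s)

lemma EE_eq (s : ℂ) (k : ℕ) : EE s k = 2 ^ s * (1 / (((2 * k : ℕ) : ℂ) + 1) ^ s) := by
  have h : ((2 * k : ℕ) : ℂ) + 1 = ((2 : ℝ) : ℂ) * ((k + 1/2 : ℝ) : ℂ) := by push_cast; ring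
  rw [h, Complex.mul_cpow_ofReal_nonneg (by norm_num) (by positivity), EE, Complex.cpow_neg]
  have : ((2:ℝ):ℂ) ^ s ≠ 0 := by simp [Complex.cpow_eq_zero_iff]
  push_cast at *
  field_simp

lemma summable_zeta {s : ℂ} (hs : 1 < s.re) : Summable (fun n : ℕ => 1 / ((n : ℂ) + 1) ^ s) := by
  have := (Complex.summable_one_div_nat_cpow.2 hs)
  simpa using (summable_nat_add_iff 1).2 this

lemma summable_EE {s : ℂ} (hs : 1 < s.re) : Summable (EE s) := by
  have h := (summable_zeta hs).comp_injective
    (show Function.Injective (fun j : ℕ => 2 * j) from fun a b h => by simpa using h)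
  have := h.mul_left (2 ^ s)
  refine this.congr fun k => ?_
  rw [EE_eq]; rfl

lemma tsum_EE {s : ℂ} (hs : 1 < s.re) : ∑' k, EE s k = (2 ^ s - 1) * riemannZeta s := by
  have hS := summable_zeta hs
  have h1 := hS.comp_injective
    (show Function.Injective (fun j : ℕ => 2 * j) from fun a b h => by simpa using h)
  have h2 := hS.comp_injective
    (show Function.Injective (fun j : ℕ => 2 * j + 1) from fun a b h => by simpa using h)
  have h : (∑' k : ℕ, 1 / (((2 * k : ℕ) : ℂ) + 1) ^ s) +
      (∑' k : ℕ, 1 / (((2 * k + 1 : ℕ) : ℂ) + 1) ^ s) = ∑' n : ℕ, 1 / ((n : ℂ) + 1) ^ s :=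
    tsum_even_add_odd (f := fun n : ℕ => 1 / ((n : ℂ) + 1) ^ s) h1 h2
  rw [← zeta_eq_tsum_one_div_nat_add_one_cpow hs] at h
  have h3 : ∑' k : ℕ, (1 / (((2 * k + 1 : ℕ) : ℂ) + 1) ^ s) = 2 ^ (-s) * riemannZeta s := by
    rw [zeta_eq_tsum_one_div_nat_add_one_cpow hs, ← tsum_mul_left]
    congr 1; ext k
    have h : ((2 * k + 1 : ℕ) : ℂ) + 1 = ((2 : ℝ) : ℂ) * ((k + 1 : ℝ) : ℂ) := by push_cast; ring
    rw [h, Complex.mul_cpow_ofReal_nonneg (by norm_num) (by positivity), Complex.cpow_neg]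
    push_cast
    field_simp
  rw [h3] at h
  have h4 : ∑' k, EE s k = 2 ^ s * ∑' k : ℕ, (1 / (((2 * k : ℕ) : ℂ) + 1) ^ s) := by
    rw [← tsum_mul_left]; congr 1; ext k; exact EE_eq s k
  rw [h4, eq_sub_of_add_eq h, Complex.cpow_neg]
  have : (2:ℂ) ^ s ≠ 0 := by simp [Complex.cpow_eq_zero_iff]
  field_simp

lemma fixed_k (s : ℂ) (k : ℕ) :
    HasSum (fun j : ℕ => cc s j * (1 / ((k : ℂ) + 1) ^ (s + 2 * j)))
      ((EE s k + EE s (k+1) + EE (s-1) k - EE (s-1) (k+1)) / 2) := by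
  set κ : ℝ := k + 1 with hκ
  have hκ0 : 0 < κ := by positivity
  have hκ1 : 1 ≤ κ := by simp [hκ]
  have hκc : (κ : ℂ) ≠ 0 := by exact_mod_cast hκ0.ne'
  set x : ℝ := 1 / (2 * κ) with hxd
  have hx0 : 0 < x := by positivity
  have hx1 : x < 1 := by rw [hxd, div_lt_one (by positivity)]; linarith
  have hx : ‖(x : ℂ)‖ < 1 := by rw [Complex.norm_real, Real.norm_of_nonneg hx0.le]; exact hx1
  have e1 : ∀ a : ℂ, (κ : ℂ) ^ (-a) * (1 - x) ^ (-a) = EE a k := by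
    intro a
    have : (1 - x : ℂ) = ((1 - x : ℝ) : ℂ) := by push_cast; rfl
    rw [this, ← Complex.mul_cpow_ofReal_nonneg hκ0.le (by linarith), EE]
    congr 1
    have : κ * (1 - x) = k + 1/2 := by rw [hxd]; field_simp; rw [hκ]; ring
    rw [← Complex.ofReal_mul, this]; push_cast; rfl
  have e2 : ∀ a : ℂ, (κ : ℂ) ^ (-a) * (1 + x) ^ (-a) = EE a (k+1) := by
    intro a
    have : (1 + x : ℂ) = ((1 + x : ℝ) : ℂ) := by push_cast; rfl
    rw [this, ← Complex.mul_cpow_ofReal_nonneg hκ0.le (by linarith), EE]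
    congr 1
    have : κ * (1 + x) = k + 1 + 1/2 := by rw [hxd]; field_simp; rw [hκ]; ring
    rw [← Complex.ofReal_mul, this]; push_cast; rfl
  have hA := (even_part s x hx).mul_left ((κ : ℂ) ^ (-s))
  have hB := (odd_part (s-1) x hx).mul_left ((κ : ℂ) ^ (-(s-1)))
  rw [mul_add, e1, e2] at hA
  rw [mul_sub, e1, e2] at hB
  have hC := (hA.add hB).div_const 2
  rw [← add_sub_assoc] at hC
  refine hC.congr_fun ?_ |> fun h => h
  intro j
  have hk : ((k : ℂ) + 1) = (κ : ℂ) := by rw [hκ]; push_cast; rfl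
  rw [hk, PP_succ, cc, Nat.factorial_succ]
  have p1 : (κ : ℂ) ^ (-(s-1)) = κ * (κ : ℂ) ^ (-s) := by
    rw [show -(s-1) = 1 + (-s) by ring, Complex.cpow_add _ _ hκc, Complex.cpow_one]
  have p2 : (κ : ℂ) ^ (s + 2 * j) = κ ^ s * κ ^ (2 * j) := by
    rw [Complex.cpow_add _ _ hκc]; congr 1
    rw [← Complex.cpow_natCast]; push_cast; rfl
  have hf : ((2*j).factorial : ℂ) ≠ 0 := by exact_mod_cast (2*j).factorial_ne_zero
  have hj : (2 * (j:ℂ) + 1) ≠ 0 := by exact_mod_cast (2*j).succ_ne_zero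
  have hs0 : (κ : ℂ) ^ s ≠ 0 := by simp [Complex.cpow_eq_zero_iff, hκc]
  have hxc : (x : ℂ) = 1 / (2 * κ) := by rw [hxd]; push_cast; rfl
  have h4 : (4:ℂ)^j = 2 ^ (2*j) := by rw [pow_mul]; norm_num
  rw [p1, p2, hxc, h4, Complex.cpow_neg, pow_succ, div_pow, mul_pow]
  push_cast
  field_simp
  ring

lemma norm_PP_le (s : ℂ) (hs : ‖s‖ ≤ 4) (n : ℕ) : ‖PP s n‖ ≤ ((n+3).factorial : ℝ) / 6 := by
  induction n with
  | zero => simp [PP, Nat.factorial]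
  | succ n ih =>
    have h1 : PP s (n+1) = PP s n * (s + n) := by simp [PP, Finset.prod_range_succ]
    have h2 : ‖s + n‖ ≤ 4 + n := (norm_add_le _ _).trans (by simpa using hs)
    rw [h1, norm_mul, show n + 1 + 3 = (n + 3) + 1 by ring, Nat.factorial_succ]
    calc ‖PP s n‖ * ‖s + n‖ ≤ ((n+3).factorial : ℝ) / 6 * (4 + n) := by gcongr
      _ = _ := by push_cast; ring

noncomputable def uu (j : ℕ) : ℝ := (2 * j + 3) ^ 3 * (1 / 4) ^ j

lemma summable_uu : Summable uu := by
  have h : ∀ k : ℕ, Summable (fun n : ℕ => (n : ℝ) ^ k * (1 / 4 : ℝ) ^ n) := fun k =>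
    summable_pow_mul_geometric_of_norm_lt_one k (by norm_num)
  have := ((((h 3).mul_left 8).add ((h 2).mul_left 36)).add ((h 1).mul_left 54)).add
    ((h 0).mul_left 27)
  refine this.congr fun j => ?_
  rw [uu]; ring

lemma norm_cc_le (s : ℂ) (hs : ‖s‖ ≤ 4) (j : ℕ) : ‖cc s j‖ ≤ uu j := by
  have h1 := norm_PP_le s hs (2*j)
  have h2 : ‖(2 * j + (s + 1) / 2 : ℂ)‖ ≤ 2 * j + 3 := by
    refine (norm_add_le _ _).trans ?_
    have : ‖s + 1‖ ≤ 5 := (norm_add_le _ _).trans (by rw [norm_one]; linarith)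
    simp; linarith
  have hf : (0:ℝ) < ((2*j+1).factorial : ℝ) := by exact_mod_cast (2*j+1).factorial_pos
  rw [cc, norm_div, norm_mul, norm_div, norm_pow, uu]
  have e : (((2*j+3).factorial : ℕ) : ℝ) = (2*j+3) * ((2*j+2) * ((2*j+1).factorial : ℝ)) := by
    rw [Nat.factorial_succ, Nat.factorial_succ]; push_cast; ring
  rw [e] at h1
  simp only [Complex.norm_natCast, Complex.norm_ofNat]
  rw [one_div, inv_pow, div_eq_mul_inv]
  gcongr
  have h3 : ‖PP s (2*j)‖ / ((2*j+1).factorial : ℝ) ≤ (2*j+3)^2 := by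
    rw [div_le_iff₀ hf]
    refine h1.trans ?_
    have : (0:ℝ) ≤ j := by positivity
    have hh : (2*j+3) * (2*j+2) / 6 ≤ ((2*j+3)^2 : ℝ) := by nlinarith
    calc _ = ((2*j+3) * (2*j+2) / 6 : ℝ) * ((2*j+1).factorial : ℝ) := by ring
      _ ≤ _ := by gcongr
  calc _ ≤ ((2*j+3)^2 : ℝ) * (2 * j + 3) := by gcongr
    _ = _ := by ring

lemma summable_two : Summable (fun n : ℕ => 1 / ((n : ℝ) + 1) ^ 2) := by
  have := (Real.summable_one_div_nat_pow (p := 2)).2 (by norm_num)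
  simpa using (summable_nat_add_iff 1).2 this

lemma norm_term_le (w : ℂ) (hw : 2 ≤ w.re) (n : ℕ) :
    ‖1 / ((n : ℂ) + 1) ^ w‖ ≤ 1 / ((n : ℝ) + 1) ^ 2 := by
  have e : ((n : ℂ) + 1) = (((n : ℝ) + 1 : ℝ) : ℂ) := by push_cast; rfl
  rw [e, norm_div, norm_one, Complex.norm_cpow_eq_rpow_re_of_pos (by positivity)]
  gcongr
  rw [← Real.rpow_natCast]
  exact Real.rpow_le_rpow_of_exponent_le (by simp) (by simpa using hw)

lemma norm_zeta_le (w : ℂ) (hw : 2 ≤ w.re) :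
    ‖riemannZeta w‖ ≤ ∑' n : ℕ, 1 / ((n : ℝ) + 1) ^ 2 := by
  rw [zeta_eq_tsum_one_div_nat_add_one_cpow (by linarith)]
  exact tsum_of_norm_bounded summable_two.hasSum (norm_term_le w hw)

lemma EE_zero (s : ℂ) : EE s 0 = 2 ^ s := by
  rw [EE_eq]; simp

lemma uu_nonneg (j : ℕ) : 0 ≤ uu j := by rw [uu]; positivity

lemma two_nonneg (n : ℕ) : 0 ≤ 1 / ((n : ℝ) + 1) ^ 2 := by positivity

lemma summable_prod_aux (f g : ℕ → ℝ) (hf : Summable f) (hg : Summable g)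
    (hf0 : ∀ n, 0 ≤ f n) (hg0 : ∀ n, 0 ≤ g n) : Summable (fun p : ℕ × ℕ => f p.1 * g p.2) :=
  Summable.mul_of_nonneg hf hg hf0 hg0

lemma summable_prod_bound :
    Summable (fun p : ℕ × ℕ => uu p.1 * (1 / ((p.2 : ℝ) + 1) ^ 2)) :=
  summable_prod_aux uu (fun n : ℕ => 1 / ((n : ℝ) + 1) ^ 2) summable_uu summable_two
    uu_nonneg two_nonneg

lemma double_sum (f : ℕ → ℕ → ℂ) (a b : ℕ → ℂ) (S : ℂ)
    (hf : Summable (fun p : ℕ × ℕ => f p.1 p.2))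
    (h1 : ∀ j, HasSum (f j) (a j)) (h2 : ∀ k, HasSum (fun j => f j k) (b k))
    (hb : HasSum b S) : HasSum a S := by
  have h3 := hf.hasSum.prod_fiberwise h1
  have h4 := hf.prod_symm.hasSum.prod_fiberwise h2
  have h5 : ∑' p : ℕ × ℕ, f p.1 p.2 = ∑' p : ℕ × ℕ, f p.swap.1 p.swap.2 :=
    ((Equiv.prodComm ℕ ℕ).tsum_eq (fun p : ℕ × ℕ => f p.1 p.2)).symm
  rw [h5, h4.unique hb] at h3
  exact h3

lemma key {s : ℂ} (hs : 2 < s.re) (hs4 : ‖s‖ ≤ 4) :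
    HasSum (fun j : ℕ => cc s j * riemannZeta (s + 2 * j))
      ((2 ^ s - 1) * riemannZeta s - 2 ^ s / 4) := by
  have hre : ∀ j : ℕ, 2 ≤ (s + 2 * j).re := fun j => by
    have : (0:ℝ) ≤ j := by positivity
    simp; linarith
  have hsum : Summable (fun p : ℕ × ℕ => cc s p.1 * (1 / ((p.2 : ℂ) + 1) ^ (s + 2 * p.1))) := by
    refine Summable.of_norm_bounded summable_prod_bound ?_
    rintro ⟨j, k⟩
    rw [norm_mul]
    exact mul_le_mul (norm_cc_le s hs4 j) (norm_term_le _ (hre j) k) (norm_nonneg _)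
      (uu_nonneg _)
  have h1 : ∀ j : ℕ, HasSum (fun k : ℕ => cc s j * (1 / ((k : ℂ) + 1) ^ (s + 2 * j)))
      (cc s j * riemannZeta (s + 2 * j)) := by
    intro j
    have hj := hre j
    rw [zeta_eq_tsum_one_div_nat_add_one_cpow (by linarith)]
    exact ((summable_zeta (by linarith)).hasSum).mul_left _
  refine double_sum (fun j k => cc s j * (1 / ((k : ℂ) + 1) ^ (s + 2 * j))) _ _ _ hsum h1
    (fun k => fixed_k s k) ?_
  have a1 := summable_EE (s := s) (by linarith)
  have a2 := summable_EE (s := s - 1) (by simp; linarith)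
  have b1 := (hasSum_nat_add_iff' 1).2 a1.hasSum
  have b2 := (hasSum_nat_add_iff' 1).2 a2.hasSum
  have := (((a1.hasSum.add b1).add a2.hasSum).sub b2).div_const 2
  suffices e : (2 ^ s - 1) * riemannZeta s - 2 ^ s / 4 = (∑' k, EE s k + (∑' k, EE s k -
      ∑ i ∈ Finset.range 1, EE s i) + ∑' k, EE (s - 1) k - (∑' k, EE (s - 1) k -
      ∑ i ∈ Finset.range 1, EE (s - 1) i)) / 2 by
    rw [e]; exact this
  simp only [Finset.sum_range_one, EE_zero, tsum_EE (s := s) (by linarith)]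
  rw [Complex.cpow_sub _ _ (by norm_num), Complex.cpow_one]
  ring

noncomputable def FF (j : ℕ) (s : ℂ) : ℂ :=
  cc s (j + 2) * riemannZeta (s + 2 * ((j + 2 : ℕ) : ℂ))

def UU : Set ℂ := {s | -2 < s.re} ∩ Metric.ball 0 4

lemma isOpen_UU : IsOpen UU :=
  (isOpen_lt continuous_const Complex.continuous_re).inter Metric.isOpen_ball

lemma convex_UU : Convex ℝ UU := (convex_halfSpace_re_gt _).inter (convex_ball _ _)

lemma re_UU {s : ℂ} (hs : s ∈ UU) (j : ℕ) : 2 ≤ (s + 2 * ((j + 2 : ℕ) : ℂ)).re := by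
  have h : -2 < s.re := hs.1
  have : (0:ℝ) ≤ j := by positivity
  simp; linarith

lemma diff_PP (n : ℕ) : Differentiable ℂ (fun s => PP s n) := by
  unfold PP; fun_prop

lemma diff_cc (j : ℕ) : Differentiable ℂ (fun s => cc s j) := by
  unfold cc
  have := diff_PP (2 * j)
  fun_prop

lemma diff_zeta_shift (j : ℕ) {s : ℂ} (hs : s ∈ UU) :
    DifferentiableAt ℂ (fun s => riemannZeta (s + 2 * ((j + 2 : ℕ) : ℂ))) s := by
  have h : s + 2 * ((j + 2 : ℕ) : ℂ) ≠ 1 := by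
    intro h
    have := re_UU hs j
    rw [h] at this
    norm_num at this
  exact (differentiableAt_riemannZeta h).comp s (by fun_prop)

lemma diff_FF (j : ℕ) : DifferentiableOn ℂ (FF j) UU := fun s hs =>
  (((diff_cc _) s).mul (diff_zeta_shift j hs)).differentiableWithinAt

noncomputable def vv (j : ℕ) : ℝ := uu (j + 2) * ∑' n : ℕ, 1 / ((n : ℝ) + 1) ^ 2

lemma summable_vv : Summable vv := ((summable_nat_add_iff 2).2 summable_uu).mul_right _

lemma FF_le (j : ℕ) (s : ℂ) (hs : s ∈ UU) : ‖FF j s‖ ≤ vv j := by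
  rw [FF, norm_mul]
  exact mul_le_mul (norm_cc_le s (mem_ball_zero_iff.1 hs.2).le _) (norm_zeta_le _ (re_UU hs j))
    (norm_nonneg _) (uu_nonneg _)

noncomputable def GG (s : ℂ) : ℂ := ∑' j, FF j s

lemma diff_GG : DifferentiableOn ℂ GG UU :=
  Complex.differentiableOn_tsum_of_summable_norm summable_vv diff_FF isOpen_UU FF_le

noncomputable def HH (s : ℂ) : ℂ :=
  (2 ^ s - 1 - (s + 1) / 2) * riemannZeta₁ s - (s - 1) * (2 ^ s / 4)
    - (s - 1) * (s * (2 + (s + 1) / 2) / 24 * riemannZeta₁ (s + 2)) - (s - 1) * GG s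

lemma diff_two : Differentiable ℂ (fun s : ℂ => (2:ℂ) ^ s) := fun s =>
  (differentiableAt_id.const_cpow (Or.inl (by norm_num)))

lemma diff_HH : DifferentiableOn ℂ HH UU := by
  have h1 := diff_two.differentiableOn (s := UU)
  have h2 := differentiable_riemannZeta₁.differentiableOn (s := UU)
  have h3 : DifferentiableOn ℂ (fun s => riemannZeta₁ (s + 2)) UU :=
    (differentiable_riemannZeta₁.comp (by fun_prop : Differentiable ℂ fun s : ℂ => s + 2)).differentiableOn
  have h4 := diff_GG
  unfold HH
  fun_prop

lemma HH_zero_of_re {s : ℂ} (hs : 2 < s.re) (hs4 : ‖s‖ ≤ 4) : HH s = 0 := by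
  have h := key hs hs4
  have h' := (hasSum_nat_add_iff' 2).2 h
  have hG : GG s = _ := h'.tsum_eq
  have n1 : s ≠ 1 := by rintro rfl; norm_num at hs
  have n2 : s + 2 ≠ 1 := by
    intro h
    have := congrArg Complex.re h
    simp at this; linarith
  have m1 : s - 1 ≠ 0 := sub_ne_zero.2 n1
  have m2 : s + 2 - 1 ≠ 0 := sub_ne_zero.2 n2
  have z1 : riemannZeta₁ s = (s - 1) * riemannZeta s := by
    rw [riemannZeta_eq_inv_sub_mul n1]; field_simp
  have z2 : riemannZeta₁ (s + 2) = (s + 1) * riemannZeta (s + 2) := by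
    rw [riemannZeta_eq_inv_sub_mul n2, show s + 1 = s + 2 - 1 by ring]; field_simp
  rw [HH, hG, z1, z2]
  have p0 : cc s 0 = (s + 1) / 2 := by simp [cc, PP]
  have p1 : cc s 1 = s * (s + 1) / 6 * (2 + (s + 1) / 2) / 4 := by
    simp [cc, PP, Finset.prod_range_succ, Nat.factorial]
  simp only [Finset.sum_range_succ, Finset.sum_range_zero, p0, p1]
  push_cast
  simp only [mul_zero, add_zero, mul_one, zero_add]
  ring

lemma HH_zero {s : ℂ} (hs : s ∈ UU) : HH s = 0 := by
  have h3 : (3 : ℂ) ∈ UU := by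
    refine ⟨?_, ?_⟩ <;> norm_num
  refine (diff_HH.analyticOnNhd isOpen_UU).eqOn_zero_of_preconnected_of_eventuallyEq_zero
    convex_UU.isPreconnected h3 ?_ hs
  have h2 : {s : ℂ | 2 < s.re} ∈ nhds (3:ℂ) :=
    (isOpen_lt continuous_const Complex.continuous_re).mem_nhds (by norm_num)
  filter_upwards [isOpen_UU.mem_nhds h3, h2] with s h1 h2
  exact HH_zero_of_re h2 (mem_ball_zero_iff.1 h1.2).le

lemma neg_one_mem : (-1 : ℂ) ∈ UU := by
  refine ⟨?_, ?_⟩ <;> norm_num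

lemma PP_add_two (s : ℂ) (n : ℕ) : PP s (n + 2) = s * (s + 1) * PP (s + 2) n := by
  simp only [PP, Finset.prod_range_succ']
  have : ∏ i ∈ Finset.range n, (s + ((i + 1 + 1 : ℕ) : ℂ)) = ∏ i ∈ Finset.range n, (s + 2 + i) :=
    Finset.prod_congr rfl fun i _ => by push_cast; ring
  rw [this]; push_cast; ring

lemma PP_one (n : ℕ) : PP 1 n = (n.factorial : ℂ) := by
  induction n with
  | zero => simp [PP]
  | succ n ih =>
    rw [Nat.factorial_succ, show PP 1 (n+1) = PP 1 n * (1 + n) by simp [PP, Finset.prod_range_succ],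
      ih]
    push_cast; ring

lemma deriv_FF (j : ℕ) : deriv (FF j) (-1) =
    -(1/4) * (riemannZeta (2 * (j + 1) + 1) / ((2 * j + 3) * (2 * j + 5) * 4 ^ (j + 1))) := by
  set h : ℂ → ℂ := fun s => s * PP (s + 2) (2 * j + 2) / ((2*(j+2)+1).factorial : ℂ) *
    (2 * ((j + 2 : ℕ) : ℂ) + (s + 1) / 2) / 4 ^ (j + 2) *
      riemannZeta (s + 2 * ((j + 2 : ℕ) : ℂ)) with hh
  have e : FF j = fun s => (s + 1) * h s := by
    ext s
    rw [FF, cc, show 2 * (j + 2) = (2 * j + 2) + 2 by ring, PP_add_two, hh]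
    ring_nf
  have hd : DifferentiableAt ℂ h (-1) := by
    have h1 := diff_zeta_shift j neg_one_mem
    have h2 : Differentiable ℂ (fun s => PP (s + 2) (2 * j + 2)) :=
      (diff_PP (2 * j + 2)).comp (by fun_prop : Differentiable ℂ fun s : ℂ => s + 2)
    rw [hh]
    fun_prop
  have hd1 : HasDerivAt (fun s : ℂ => s + 1) 1 (-1) := (hasDerivAt_id _).add_const _
  have := (hd1.mul hd.hasDerivAt).deriv
  rw [e]
  refine this.trans ?_
  rw [hh]
  have f1 : (((2*(j+2)+1).factorial : ℕ) : ℂ) =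
      (2*j+5) * ((2*j+4) * ((2*j+3) * ((2*j+2).factorial : ℂ))) := by
    rw [show 2*(j+2)+1 = (2*j+2)+1+1+1 by ring, Nat.factorial_succ, Nat.factorial_succ,
      Nat.factorial_succ]
    push_cast; ring
  have hf : ((2*j+2).factorial : ℂ) ≠ 0 := by exact_mod_cast (2*j+2).factorial_ne_zero
  have i3 : (2 * (j:ℂ) + 3) ≠ 0 := by exact_mod_cast (2*j+2).succ_ne_zero
  have i4 : (2 * (j:ℂ) + 4) ≠ 0 := by exact_mod_cast (2*j+3).succ_ne_zero
  have i5 : (2 * (j:ℂ) + 5) ≠ 0 := by exact_mod_cast (2*j+4).succ_ne_zero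
  have a1 : (-1 + 2 : ℂ) = 1 := by norm_num
  have a2 : (-1 + 2 * ((j + 2 : ℕ) : ℂ)) = 2 * (j + 1) + 1 := by push_cast; ring
  simp only [a1, a2, PP_one, f1]
  push_cast
  field_simp
  ring

lemma zeta_neg_one : riemannZeta (-1) = -1 / 12 := by
  have := riemannZeta_neg_nat_eq_bernoulli' 1
  rw [Nat.cast_one] at this
  rw [this, show (1 + 1 : ℕ) = 2 by rfl, bernoulli'_two]
  norm_num

lemma deriv_GG : deriv GG (-1) =
    -Complex.log 2 / 6 - deriv riemannZeta (-1) / 2 + 1 / 24 - 1 / 16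
      + Real.eulerMascheroniConstant / 12 := by
  have e : GG =ᶠ[nhds (-1)] fun s => (2 ^ s - 1 - (s + 1) / 2) * riemannZeta s - 2 ^ s / 4
      - s * (2 + (s + 1) / 2) / 24 * riemannZeta₁ (s + 2) := by
    have h1 : ∀ᶠ s : ℂ in nhds (-1), s ≠ 1 := isOpen_ne.mem_nhds (by norm_num)
    filter_upwards [isOpen_UU.mem_nhds neg_one_mem, h1] with s hs n1
    have h := HH_zero hs
    have m1 : s - 1 ≠ 0 := sub_ne_zero.2 n1
    have z1 : riemannZeta₁ s = (s - 1) * riemannZeta s := by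
      rw [riemannZeta_eq_inv_sub_mul n1]; field_simp
    rw [HH, z1] at h
    apply mul_left_cancel₀ m1
    linear_combination -h
  rw [e.deriv_eq]
  have d0 := hasDerivAt_id (-1 : ℂ)
  have d1 : HasDerivAt (fun s : ℂ => (2:ℂ) ^ s) (2 ^ (-1:ℂ) * Complex.log 2 * 1) (-1) :=
    d0.const_cpow (Or.inl (by norm_num))
  have d2 := (differentiableAt_riemannZeta (s := -1) (by norm_num)).hasDerivAt
  have d3 : HasDerivAt (fun s => riemannZeta₁ (s + 2)) Real.eulerMascheroniConstant (-1) := by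
    have : HasDerivAt riemannZeta₁ Real.eulerMascheroniConstant ((-1 : ℂ) + 2) := by
      rw [show (-1 : ℂ) + 2 = 1 by norm_num, ← deriv_riemannZeta₁_one]
      exact (differentiable_riemannZeta₁ 1).hasDerivAt
    exact this.comp_add_const _ _
  have d4 : HasDerivAt (fun s : ℂ => (s + 1) / 2) (1 / 2) (-1) := (d0.add_const 1).div_const 2
  have D := ((((d1.sub_const 1).sub d4).mul d2).sub (d1.div_const 4)).sub
    (((d0.mul (d4.const_add 2)).div_const 24).mul d3)
  refine D.deriv.trans ?_
  have c1 : (2:ℂ) ^ (-1:ℂ) = 1 / 2 := by rw [Complex.cpow_neg_one]; norm_num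
  simp [c1, zeta_neg_one, show (-1 : ℂ) + 2 = 1 by norm_num]
  ring

theorem stmt17 (A : ℝ)
    (hA : (Real.log A : ℂ) = 1 / 12 - deriv riemannZeta (-1)) :
    ∑' n : ℕ, riemannZeta (2 * (n + 1) + 1) / ((2 * n + 3) * (2 * n + 5) * 4 ^ (n + 1)) =
      ((-2 * Real.log A + 1 / 4 - Real.eulerMascheroniConstant / 3 +
        (2 / 3) * Real.log 2 : ℝ) : ℂ) := by
  have h := Complex.hasSum_deriv_of_summable_norm summable_vv diff_FF isOpen_UU FF_le neg_one_mem
  have h2 := (h.mul_left (-4)).tsum_eq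
  have h3 : deriv (fun w => ∑' i, FF i w) (-1) = _ := deriv_GG
  rw [h3] at h2
  have h4 : ∀ j : ℕ, -4 * deriv (FF j) (-1) =
      riemannZeta (2 * (j + 1) + 1) / ((2 * j + 3) * (2 * j + 5) * 4 ^ (j + 1)) := fun j => by
    rw [deriv_FF]; ring
  simp only [h4] at h2
  rw [h2]
  push_cast
  rw [hA]
  simp only [Complex.ofReal_log (show (0:ℝ) ≤ 2 by norm_num)]
  push_cast
  ring
end
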